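/- For all i, j ∈ {1,…,n}, the negative Demazure module V^-_{s_i}(ϖ_j) equals V(ϖ_j) if i ≠ j, and equals the direct sum ⊕_{μ ∈ Ω(ϖ_j) \ {ϖ_j}} V(ϖ_j)_μ of all weight spaces of V(ϖ_j) except the highest one if i = j. -/

import Mathlib

open scoped TensorProduct

/-- The `q`-factorial `(q - q⁻¹)(q² - q⁻²)⋯(qᵐ - q⁻ᵐ)`. -/
noncomputable def qfac (t : ℂ) (m : ℕ) : ℂ :=
  ∏ j ∈ Finset.range m, (t ^ (j + 1) - t⁻¹ ^ (j + 1))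

/-- The `q`-binomial coefficient `[m k]` at parameter `t`. -/
noncomputable def qbinom (t : ℂ) (m k : ℕ) : ℂ :=
  qfac t m / (qfac t k * qfac t (m - k))

/-- The defining relations of the quantised enveloping algebra `U_q(𝔤)` associated to a
Cartan matrix `a` with symmetrising integers `d`, on elements `E i`, `F i`, `K i` of a
`ℂ`-algebra `B`: the `K i` are commuting units, conjugation by `K i` rescales `E j` and
`F j` by `q_i^{±a i j}` (where `q_i = q^{d i}`), the commutator `[E i, F j]` is
`δ_{ij} (K_i - K_i⁻¹)/(q_i - q_i⁻¹)`, and the quantum Serre relations hold. -/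
def UqRels (q : ℂ) {n : ℕ} (a : Fin n → Fin n → ℤ) (d : Fin n → ℕ)
    (B : Type) [Ring B] [Algebra ℂ B] (E F : Fin n → B) (K : Fin n → Bˣ) : Prop :=
  (∀ i j, (K i : B) * (K j : B) = (K j : B) * (K i : B)) ∧
  (∀ i j, (K i : B) * E j = (q ^ ((d i : ℤ) * a i j)) • (E j * (K i : B))) ∧
  (∀ i j, (K i : B) * F j = (q ^ (-((d i : ℤ) * a i j))) • (F j * (K i : B))) ∧
  (∀ i j, E i * F j - F j * E i =
    if i = j then (q ^ (d i : ℤ) - q ^ (-(d i : ℤ)))⁻¹ • ((K i : B) - (((K i)⁻¹ : Bˣ) : B))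
    else 0) ∧
  (∀ i j, i ≠ j → ∑ k ∈ Finset.range ((1 - a i j).toNat + 1),
      ((-1 : ℂ) ^ k * qbinom (q ^ (d i : ℤ)) ((1 - a i j).toNat) k) •
        (E i ^ ((1 - a i j).toNat - k) * E j * E i ^ k) = 0) ∧
  (∀ i j, i ≠ j → ∑ k ∈ Finset.range ((1 - a i j).toNat + 1),
      ((-1 : ℂ) ^ k * qbinom (q ^ (d i : ℤ)) ((1 - a i j).toNat) k) •
        (F i ^ ((1 - a i j).toNat - k) * F j * F i ^ k) = 0)

/-- The weight space of weight `μ = ∑ μ i ϖ i` in a `U_q(𝔤)`-module: the set of vectors on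
which each `K i` acts by the scalar `q^{(μ, α_i)} = q^{μ i * d i}`. -/
noncomputable def wtSp (q : ℂ) {n : ℕ} (d : Fin n → ℕ)
    {U : Type} [Ring U] [Algebra ℂ U] (K : Fin n → Uˣ)
    {Vc : Type} [AddCommGroup Vc] [Module ℂ Vc] (ρ : U →ₐ[ℂ] Module.End ℂ Vc)
    (μ : Fin n → ℤ) : Submodule ℂ Vc :=
  ⨅ i : Fin n, LinearMap.ker (ρ (K i : U) - (q ^ (μ i * (d i : ℤ))) • (1 : Module.End ℂ Vc))

/-- `ξ` is a dual vector of weight `μ`:  equivalently (via the antipode-twisted action on the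
dual module), `ξ` vanishes on every weight space of weight `ν ≠ -μ`. -/
noncomputable def inDualWt (q : ℂ) {n : ℕ} (d : Fin n → ℕ)
    {U : Type} [Ring U] [Algebra ℂ U] (K : Fin n → Uˣ)
    {Vc : Type} [AddCommGroup Vc] [Module ℂ Vc] (ρ : U →ₐ[ℂ] Module.End ℂ Vc)
    (μ : Fin n → ℤ) (ξ : Module.Dual ℂ Vc) : Prop :=
  ∀ ν : Fin n → ℤ, ν ≠ -μ → ∀ x ∈ wtSp q d K ρ ν, ξ x = 0

/-- The Demazure-type submodule generated by the weight space of weight `ν` under the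
subalgebra of `U` generated by `gens` (take `gens = Set.range E` for `V⁺_w(λ)` with
`ν = wλ`, and `gens = Set.range F` for `V⁻_w(λ)`). -/
noncomputable def demazure (q : ℂ) {n : ℕ} (d : Fin n → ℕ)
    {U : Type} [Ring U] [Algebra ℂ U] (gens : Set U) (K : Fin n → Uˣ)
    {Vc : Type} [AddCommGroup Vc] [Module ℂ Vc] (ρ : U →ₐ[ℂ] Module.End ℂ Vc)
    (ν : Fin n → ℤ) : Submodule ℂ Vc :=
  Submodule.span ℂ
    {x | ∃ y ∈ Algebra.adjoin ℂ gens, ∃ u ∈ wtSp q d K ρ ν, x = ρ y u}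

/-- A two-sided ideal of a (possibly noncommutative) ring is prime if it is proper and
`x R y ⊆ P` implies `x ∈ P` or `y ∈ P`. -/
def IsPrimeTwoSided {R : Type*} [Ring R] (P : TwoSidedIdeal R) : Prop :=
  P ≠ ⊤ ∧ ∀ x y : R, (∀ r : R, x * r * y ∈ P) → x ∈ P ∨ y ∈ P

/-- An element `r` of a ring is normal if `rR = Rr`. -/
def IsNormalElem {R : Type*} [Ring R] (r : R) : Prop :=
  (∀ x, ∃ y, r * x = y * r) ∧ ∀ x, ∃ y, x * r = r * y

/-- The ideal `Q⁺_{w}` of `O_q(G)`: generated by the coordinate functions `c^{ϖ_j}_{ξ,v}` with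
`v` a highest weight vector of `V(ϖ_j)` and `ξ` orthogonal to the Demazure module
`V⁺_w(ϖ_j)`. -/
noncomputable def Qplus (q : ℂ) {n : ℕ} (d : Fin n → ℕ)
    {U : Type} [Ring U] [Algebra ℂ U] (E : Fin n → U) (K : Fin n → Uˣ)
    {V : (Fin n → ℕ) → Type} [∀ c, AddCommGroup (V c)] [∀ c, Module ℂ (V c)]
    (ρ : ∀ c, U →ₐ[ℂ] Module.End ℂ (V c))
    {W : Type} [Group W] (σ : W →* Multiplicative (AddAut (Fin n → ℤ)))
    {A : Type} [Ring A]
    (cf : ∀ c : Fin n → ℕ, Module.Dual ℂ (V c) → V c → A)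
    (w : W) : TwoSidedIdeal A :=
  TwoSidedIdeal.span
    {x | ∃ j : Fin n, ∃ ξ : Module.Dual ℂ (V (Pi.single j 1)),
      ∃ v ∈ wtSp q d K (ρ (Pi.single j 1)) (fun k => ((Pi.single j 1 : Fin n → ℕ) k : ℤ)),
        (∀ y ∈ demazure q d (Set.range E) K (ρ (Pi.single j 1))
            (σ w (fun k => ((Pi.single j 1 : Fin n → ℕ) k : ℤ))), ξ y = 0) ∧
        x = cf (Pi.single j 1) ξ v}

/-- The ideal `Q⁻_{w}` of `O_q(G)`: generated by the coordinate functions `c^{ϖ_j}_{ξ,v}` with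
`v` a lowest weight vector of `V(ϖ_j)` and `ξ` orthogonal to the Demazure module
`V⁻_{w w₀}(ϖ_j)`. -/
noncomputable def Qminus (q : ℂ) {n : ℕ} (d : Fin n → ℕ)
    {U : Type} [Ring U] [Algebra ℂ U] (F : Fin n → U) (K : Fin n → Uˣ)
    {V : (Fin n → ℕ) → Type} [∀ c, AddCommGroup (V c)] [∀ c, Module ℂ (V c)]
    (ρ : ∀ c, U →ₐ[ℂ] Module.End ℂ (V c))
    {W : Type} [Group W] (σ : W →* Multiplicative (AddAut (Fin n → ℤ))) (w₀ : W)
    {A : Type} [Ring A]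
    (cf : ∀ c : Fin n → ℕ, Module.Dual ℂ (V c) → V c → A)
    (w : W) : TwoSidedIdeal A :=
  TwoSidedIdeal.span
    {x | ∃ j : Fin n, ∃ ξ : Module.Dual ℂ (V (Pi.single j 1)),
      ∃ v ∈ wtSp q d K (ρ (Pi.single j 1)) (σ w₀ (fun k => ((Pi.single j 1 : Fin n → ℕ) k : ℤ))),
        (∀ y ∈ demazure q d (Set.range F) K (ρ (Pi.single j 1))
            (σ (w * w₀) (fun k => ((Pi.single j 1 : Fin n → ℕ) k : ℤ))), ξ y = 0) ∧
        x = cf (Pi.single j 1) ξ v}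

/-!
Let `v` be a highest weight vector of the simple module `V(ϖ_j)`. By the triangular relations `U⁻v`
is a submodule, so it is all of `V(ϖ_j)`. A linear functional on weights that is positive on the
simple roots shows that `U⁻x` is `ℂx` plus strictly lower weight spaces for every weight vector `x`.
For `i ≠ j`, `F_i v` is killed by all `E_k` and generates only lower weights, so it vanishes, while
`E_j F_j v = v`. Hence `V(ϖ_j) = ℂv ⊕ U⁻F_j v`, and the weight spaces of weight `ϖ_j` and
`s_j ϖ_j = ϖ_j - α_j` are the lines spanned by `v` and `F_j v`.
-/

section CyclicSubmodule

variable {R U M ι : Type*} [CommSemiring R] [Semiring U] [Algebra R U] [AddCommMonoid M]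
  [Module R M]

/-- The cyclic submodule `A x`, where `A` is the subalgebra generated by the `F i`. For the
negative generators of `U_q(𝔤)` and `x` an extremal weight vector this is the negative Demazure
module. -/
def cyclicSubmodule (F : ι → U) (ρ : U →ₐ[R] Module.End R M) (x : M) : Submodule R M :=
  Submodule.span R {z | ∃ y ∈ Algebra.adjoin R (Set.range F), z = ρ y x}

variable {F : ι → U} {ρ : U →ₐ[R] Module.End R M} {x : M}

theorem mem_invtSubmodule_of_mem_adjoin {S : Set U} {P : Submodule R M}
    (hP : ∀ s ∈ S, P ∈ (ρ s).invtSubmodule) {y : U} (hy : y ∈ Algebra.adjoin R S) :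
    P ∈ (ρ y).invtSubmodule := by
  rw [Module.End.mem_invtSubmodule_iff_forall_mem_of_mem]
  induction hy using Algebra.adjoin_induction with
  | mem s hs => exact hP s hs
  | algebraMap r =>
    intro z hz
    simpa [Module.algebraMap_end_apply] using P.smul_mem r hz
  | add y₁ y₂ _ _ h₁ h₂ =>
    intro z hz
    rw [map_add]
    exact add_mem (h₁ z hz) (h₂ z hz)
  | mul y₁ y₂ _ _ h₁ h₂ =>
    intro z hz
    rw [map_mul]
    exact h₁ _ (h₂ z hz)

theorem self_mem_cyclicSubmodule : x ∈ cyclicSubmodule F ρ x :=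
  Submodule.subset_span ⟨1, one_mem _, by simp⟩

theorem cyclicSubmodule_mem_invtSubmodule (i : ι) :
    cyclicSubmodule F ρ x ∈ (ρ (F i)).invtSubmodule := by
  refine Submodule.span_le.2 ?_
  rintro _ ⟨y, hy, rfl⟩
  exact Submodule.subset_span
    ⟨F i * y, mul_mem (Algebra.subset_adjoin (Set.mem_range_self i)) hy, by simp⟩

theorem cyclicSubmodule_le {P : Submodule R M} (hx : x ∈ P)
    (hP : ∀ i, P ∈ (ρ (F i)).invtSubmodule) : cyclicSubmodule F ρ x ≤ P := by
  refine Submodule.span_le.2 ?_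
  rintro _ ⟨y, hy, rfl⟩
  exact mem_invtSubmodule_of_mem_adjoin (Set.forall_mem_range.2 hP) hy hx

theorem cyclicSubmodule_smul_le (c : R) : cyclicSubmodule F ρ (c • x) ≤ cyclicSubmodule F ρ x :=
  cyclicSubmodule_le (Submodule.smul_mem _ c self_mem_cyclicSubmodule)
    cyclicSubmodule_mem_invtSubmodule

theorem cyclicSubmodule_mem_invtSubmodule_of_forall {f : Module.End R M}
    (hx : f x ∈ cyclicSubmodule F ρ x)
    (hf : ∀ i, ∀ z ∈ cyclicSubmodule F ρ x, f z ∈ cyclicSubmodule F ρ x →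
      f (ρ (F i) z) ∈ cyclicSubmodule F ρ x) :
    cyclicSubmodule F ρ x ∈ f.invtSubmodule := by
  have hle : cyclicSubmodule F ρ x ≤
      (cyclicSubmodule F ρ x).comap f ⊓ cyclicSubmodule F ρ x :=
    cyclicSubmodule_le ⟨hx, self_mem_cyclicSubmodule⟩ fun i z hz =>
      ⟨hf i z hz.2 hz.1, cyclicSubmodule_mem_invtSubmodule i hz.2⟩
  exact hle.trans inf_le_left

theorem cyclicSubmodule_mem_invtSubmodule_of_qcommute {b : U}
    (hx : ρ b x ∈ cyclicSubmodule F ρ x) (hb : ∀ i, ∃ c : R, b * F i = c • (F i * b)) :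
    cyclicSubmodule F ρ x ∈ (ρ b).invtSubmodule := by
  refine cyclicSubmodule_mem_invtSubmodule_of_forall hx fun i z _ hbz => ?_
  obtain ⟨c, hc⟩ := hb i
  rw [← Module.End.mul_apply, ← map_mul, hc, map_smul, map_mul]
  exact Submodule.smul_mem _ c (cyclicSubmodule_mem_invtSubmodule i hbz)

theorem cyclicSubmodule_le_span_sup_of_forall_ne {j : ι} (hF : ∀ i, i ≠ j → ρ (F i) x = 0) :
    cyclicSubmodule F ρ x ≤ R ∙ x ⊔ cyclicSubmodule F ρ (ρ (F j) x) := by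
  refine cyclicSubmodule_le (Submodule.mem_sup_left (Submodule.mem_span_singleton_self x))
    fun i => (Module.End.mem_invtSubmodule _).2 (sup_le ?_ fun z hz =>
      Submodule.mem_sup_right (cyclicSubmodule_mem_invtSubmodule i hz))
  refine (Submodule.span_singleton_le_iff_mem _ _).2 (Submodule.mem_sup_right ?_)
  obtain rfl | hij := eq_or_ne i j
  · exact self_mem_cyclicSubmodule
  · rw [hF i hij]
    exact zero_mem _

end CyclicSubmodule

theorem cyclicSubmodule_eq_of_mem_span {k U M ι : Type*} [Field k] [Semiring U] [Algebra k U]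
    [AddCommMonoid M] [Module k M] {F : ι → U} {ρ : U →ₐ[k] Module.End k M} {x y : M}
    (hy : y ∈ k ∙ x) (hy0 : y ≠ 0) : cyclicSubmodule F ρ y = cyclicSubmodule F ρ x := by
  obtain ⟨c, rfl⟩ := Submodule.mem_span_singleton.1 hy
  have hc : c ≠ 0 := fun h => hy0 (by rw [h, zero_smul])
  refine le_antisymm (cyclicSubmodule_smul_le c) ?_
  simpa only [inv_smul_smul₀ hc] using
    cyclicSubmodule_smul_le (F := F) (ρ := ρ) (x := c • x) c⁻¹

section Height

theorem exists_invariant_posDef_bilinForm {R G V : Type*} [CommRing R] [PartialOrder R]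
    [IsOrderedCancelAddMonoid R] [Group G] [Finite G] [AddCommGroup V] [Module R V]
    (π : Representation R G V) (B₀ : LinearMap.BilinForm R V) (hB₀ : ∀ x ≠ 0, 0 < B₀ x x) :
    ∃ B : LinearMap.BilinForm R V,
      (∀ g x y, B (π g x) (π g y) = B x y) ∧ ∀ x ≠ 0, 0 < B x x := by
  have := Fintype.ofFinite G
  refine ⟨∑ g, B₀.compl₁₂ (π g) (π g), fun g x y => ?_, fun x hx => ?_⟩
  · simp only [LinearMap.sum_apply, LinearMap.compl₁₂_apply, ← Module.End.mul_apply, ← map_mul]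
    exact Fintype.sum_equiv (Equiv.mulRight g) _ _ fun _ => rfl
  · simp only [LinearMap.sum_apply, LinearMap.compl₁₂_apply]
    refine Finset.sum_pos (fun g _ => hB₀ _ fun h => hx ?_) Finset.univ_nonempty
    simpa using congrArg (π g⁻¹) h

/-- An action by additive automorphisms, viewed as an integral representation. -/
def representationOfAddAut {G P : Type*} [Group G] [AddCommGroup P]
    (σ : G →* Multiplicative (AddAut P)) : Representation ℤ G P where
  toFun g := (Multiplicative.toAdd (σ g)).toAddMonoidHom.toIntLinearMap
  map_one' := by rw [map_one]; rfl
  map_mul' g g' := by rw [map_mul]; rfl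

variable {n : ℕ}

/-- The simple root `α_i = ∑ k, a k i ϖ_k` in the basis of fundamental weights. -/
def simpleRoot (a : Fin n → Fin n → ℤ) (i : Fin n) : Fin n → ℤ := fun k => a k i

/-- The simple reflection `s_i μ = μ - ⟨μ, α_i^∨⟩ α_i` in the basis of fundamental weights. -/
def simpleReflection (a : Fin n → Fin n → ℤ) (i : Fin n) (μ : Fin n → ℤ) : Fin n → ℤ :=
  fun k => μ k - μ i * a k i

theorem simpleReflection_eq_sub_smul (a : Fin n → Fin n → ℤ) (i : Fin n) (μ : Fin n → ℤ) :
    simpleReflection a i μ = μ - μ i • simpleRoot a i := rfl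

theorem simpleReflection_simpleRoot {a : Fin n → Fin n → ℤ} {i : Fin n} (hai : a i i = 2) :
    simpleReflection a i (simpleRoot a i) = -simpleRoot a i := by
  rw [simpleReflection_eq_sub_smul, simpleRoot, hai, two_smul, sub_add_cancel_left]

theorem exists_pos_on_simpleRoot {a : Fin n → Fin n → ℤ} (ha_diag : ∀ i, a i i = 2)
    {W : Type*} [Group W] [Finite W] (σ : W →* Multiplicative (AddAut (Fin n → ℤ)))
    (s : Fin n → W) (hs : ∀ i μ, σ (s i) μ = simpleReflection a i μ) :
    ∃ h : (Fin n → ℤ) →ₗ[ℤ] ℤ, ∀ i, 0 < h (simpleRoot a i) := by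
  obtain ⟨B, hB_inv, hB_pos⟩ := exists_invariant_posDef_bilinForm (representationOfAddAut σ)
    (dotProductBilin ℤ ℤ)
    fun _ hx => Matrix.dotProduct_self_star_pos_iff.2 hx
  -- Pair with the sum `1` of the fundamental weights: since `s_i 1 = 1 - α_i` and `s_i α_i = -α_i`,
  -- invariance gives `2 B(1, α_i) = B(α_i, α_i)`.
  refine ⟨B 1, fun i => ?_⟩
  have hinv : B (simpleReflection a i 1) (simpleReflection a i (simpleRoot a i)) =
      B 1 (simpleRoot a i) := by
    rw [← hs, ← hs]
    exact hB_inv (s i) 1 (simpleRoot a i)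
  have hroot : simpleRoot a i ≠ 0 := fun h => by simpa [simpleRoot, ha_diag] using congrFun h i
  rw [simpleReflection_simpleRoot (ha_diag i), simpleReflection_eq_sub_smul, Pi.one_apply,
    one_smul, map_neg, map_sub, LinearMap.sub_apply] at hinv
  linarith [hB_pos _ hroot]

/-- The fundamental weight `ϖ_j`, written as the integral image of the natural-number weight
that indexes the module `V(ϖ_j)`. -/
def fundamentalWeight (j : Fin n) : Fin n → ℤ := fun k => ((Pi.single j 1 : Fin n → ℕ) k : ℤ)

theorem fundamentalWeight_self (j : Fin n) : fundamentalWeight j j = 1 := by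
  simp [fundamentalWeight]

theorem fundamentalWeight_of_ne {i j : Fin n} (hij : i ≠ j) : fundamentalWeight j i = 0 := by
  simp [fundamentalWeight, hij]

theorem simpleReflection_fundamentalWeight_self (a : Fin n → Fin n → ℤ) (j : Fin n) :
    simpleReflection a j (fundamentalWeight j) = fundamentalWeight j - simpleRoot a j := by
  rw [simpleReflection_eq_sub_smul, fundamentalWeight_self, one_smul]

theorem simpleReflection_fundamentalWeight_of_ne (a : Fin n → Fin n → ℤ) {i j : Fin n}
    (hij : i ≠ j) : simpleReflection a i (fundamentalWeight j) = fundamentalWeight j := by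
  rw [simpleReflection_eq_sub_smul, fundamentalWeight_of_ne hij, zero_smul, sub_zero]

end Height

theorem zpow_injective_of_transcendental {K L : Type*} [Field K] [Field L] [Algebra K L] {x : L}
    (hx : Transcendental K x) : Function.Injective fun m : ℤ => x ^ m := by
  have hx0 : x ≠ 0 := by
    rintro rfl
    exact hx isAlgebraic_zero
  have hfin : ¬IsOfFinOrder (Units.mk0 x hx0) := by
    rw [← Units.isOfFinOrder_val, Units.val_mk0, isOfFinOrder_iff_pow_eq_one]
    rintro ⟨m, hm, hxm⟩
    exact hx (IsAlgebraic.of_pow hm (hxm ▸ isAlgebraic_one))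
  intro m m' h
  have hunits : Units.mk0 x hx0 ^ m = Units.mk0 x hx0 ^ m' := Units.ext (by simpa using h)
  exact injective_zpow_iff_not_isOfFinOrder.2 hfin hunits

theorem ne_zero_of_zpow_injective {L : Type*} [DivisionRing L] {x : L}
    (hx : Function.Injective fun m : ℤ => x ^ m) : x ≠ 0 := by
  rintro rfl
  exact absurd (@hx 1 2 (by simp)) (by norm_num)

section Relations

variable {q : ℂ} {n : ℕ} {a : Fin n → Fin n → ℤ} {d : Fin n → ℕ}
  {B : Type} [Ring B] [Algebra ℂ B] {E F : Fin n → B} {K : Fin n → Bˣ}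

theorem UqRels.K_mul_F (hrel : UqRels q a d B E F K) (i j : Fin n) :
    (K i : B) * F j = q ^ (-((d i : ℤ) * a i j)) • (F j * (K i : B)) :=
  hrel.2.2.1 i j

theorem UqRels.K_inv_mul_F (hrel : UqRels q a d B E F K) (hq0 : q ≠ 0) (i j : Fin n) :
    ((K i)⁻¹ : Bˣ) * F j = q ^ ((d i : ℤ) * a i j) • (F j * ((K i)⁻¹ : Bˣ)) := by
  rw [Units.inv_mul_eq_iff_eq_mul, mul_smul_comm, ← mul_assoc, hrel.K_mul_F, smul_mul_assoc,
    smul_smul, ← zpow_add₀ hq0, add_neg_cancel, zpow_zero, one_smul, Units.mul_inv_cancel_right]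

theorem UqRels.E_mul_F_self (hrel : UqRels q a d B E F K) (i : Fin n) :
    E i * F i = F i * E i +
      (q ^ (d i : ℤ) - q ^ (-(d i : ℤ)))⁻¹ • ((K i : B) - ((K i)⁻¹ : Bˣ)) := by
  rw [← sub_eq_iff_eq_add', hrel.2.2.2.1, if_pos rfl]

theorem UqRels.E_mul_F_of_ne (hrel : UqRels q a d B E F K) {i j : Fin n} (hij : i ≠ j) :
    E i * F j = F j * E i := by
  rw [← sub_eq_zero, hrel.2.2.2.1, if_neg hij]

theorem UqRels.of_injective {C : Type} [Ring C] [Algebra ℂ C] {φ : B →ₐ[ℂ] C}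
    (hφ : Function.Injective φ)
    (hrel : UqRels q a d C (φ ∘ E) (φ ∘ F) fun i => Units.map φ (K i)) :
    UqRels q a d B E F K := by
  obtain ⟨hKK, hKE, hKF, hEF, hEE, hFF⟩ := hrel
  refine ⟨fun i j => hφ ?_, fun i j => hφ ?_, fun i j => hφ ?_, fun i j => hφ ?_,
    fun i j hij => hφ ?_, fun i j hij => hφ ?_⟩
  · simpa using hKK i j
  · simpa using hKE i j
  · simpa using hKF i j
  · simpa [apply_ite φ] using hEF i j
  · simpa using hEE i j hij
  · simpa using hFF i j hij

/-- The generators `E i`, `F i`, `K i`, `(K i)⁻¹` of `U_q(𝔤)`. -/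
def uqGenerators (E F : Fin n → B) (K : Fin n → Bˣ) : Set B :=
  Set.range E ∪ Set.range F ∪ Set.range (fun i => (K i : B)) ∪
    Set.range fun i => (((K i)⁻¹ : Bˣ) : B)

theorem adjoin_uqGenerators_eq_top_of_universal (hrel : UqRels q a d B E F K)
    (huniv : ∀ (C : Type) [Ring C] [Algebra ℂ C] (E' F' : Fin n → C) (K' : Fin n → Cˣ),
      UqRels q a d C E' F' K' → ∃! φ : B →ₐ[ℂ] C,
        (∀ i, φ (E i) = E' i) ∧ (∀ i, φ (F i) = F' i) ∧ (∀ i, φ (K i : B) = (K' i : C))) :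
    Algebra.adjoin ℂ (uqGenerators E F K) = ⊤ := by
  let S := Algebra.adjoin ℂ (uqGenerators E F K)
  have hE (i) : E i ∈ S := Algebra.subset_adjoin (by simp [uqGenerators])
  have hF (i) : F i ∈ S := Algebra.subset_adjoin (by simp [uqGenerators])
  have hK (i) : (K i : B) ∈ S := Algebra.subset_adjoin (by simp [uqGenerators])
  have hK_inv (i) : (((K i)⁻¹ : Bˣ) : B) ∈ S := Algebra.subset_adjoin (by simp [uqGenerators])
  let K_S (i : Fin n) : Sˣ := ⟨⟨K i, hK i⟩, ⟨((K i)⁻¹ : Bˣ), hK_inv i⟩,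
    Subtype.ext (K i).mul_inv, Subtype.ext (K i).inv_mul⟩
  have hK_S : (fun i => Units.map (S.val : S →* B) (K_S i)) = K := funext fun i => Units.ext rfl
  have hS : UqRels q a d S (fun i => ⟨E i, hE i⟩) (fun i => ⟨F i, hF i⟩) K_S :=
    UqRels.of_injective (φ := S.val) Subtype.val_injective (hK_S ▸ hrel)
  -- The map to `S` given by universality, followed by the inclusion, is the identity.
  obtain ⟨φ, ⟨hφE, hφF, hφK⟩, -⟩ := huniv S _ _ _ hS
  have hφ : S.val.comp φ = AlgHom.id ℂ B := (huniv B E F K hrel).unique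
    ⟨fun i => by simp [hφE], fun i => by simp [hφF], fun i => by simp [hφK, K_S]⟩
    ⟨fun _ => rfl, fun _ => rfl, fun _ => rfl⟩
  refine Algebra.eq_top_iff.2 fun y => ?_
  rw [← AlgHom.id_apply (R := ℂ) y, ← hφ]
  exact (φ y).2

end Relations

theorem iSup_mem_setOf_ne_bot_and {ι α : Type*} [CompleteLattice α] (f : ι → α) (p : ι → Prop) :
    ⨆ i ∈ {i | f i ≠ ⊥ ∧ p i}, f i = ⨆ (i) (_ : p i), f i := by
  refine iSup_congr fun i => ?_
  by_cases hi : f i = ⊥ <;> simp [hi]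

section Weights

variable {q : ℂ} {n : ℕ} {a : Fin n → Fin n → ℤ} {d : Fin n → ℕ}
  {U : Type} [Ring U] [Algebra ℂ U] {E F : Fin n → U} {K : Fin n → Uˣ}
  {M : Type} [AddCommGroup M] [Module ℂ M] {ρ : U →ₐ[ℂ] Module.End ℂ M}
  {h : (Fin n → ℤ) →ₗ[ℤ] ℤ} {μ : Fin n → ℤ} {x : M}

theorem mem_wtSp_iff : x ∈ wtSp q d K ρ μ ↔ ∀ i, ρ (K i : U) x = q ^ (μ i * (d i : ℤ)) • x := by
  simp [wtSp, sub_eq_zero]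

theorem map_K_inv_of_mem_wtSp (hq0 : q ≠ 0) (hx : x ∈ wtSp q d K ρ μ) (i : Fin n) :
    ρ ((K i)⁻¹ : Uˣ) x = q ^ (-(μ i * (d i : ℤ))) • x := by
  rw [zpow_neg, eq_inv_smul_iff₀ (zpow_ne_zero _ hq0), ← map_smul, ← mem_wtSp_iff.1 hx i,
    ← Module.End.mul_apply, ← map_mul, Units.inv_mul, map_one, Module.End.one_apply]

theorem map_F_mem_wtSp (hq0 : q ≠ 0) (hrel : UqRels q a d U E F K)
    (hx : x ∈ wtSp q d K ρ μ) (j : Fin n) :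
    ρ (F j) x ∈ wtSp q d K ρ (μ - simpleRoot a j) := by
  refine mem_wtSp_iff.2 fun i => ?_
  rw [← Module.End.mul_apply, ← map_mul, hrel.K_mul_F, map_smul, map_mul, LinearMap.smul_apply,
    Module.End.mul_apply, mem_wtSp_iff.1 hx i, map_smul, smul_smul, ← zpow_add₀ hq0]
  congr 2
  simp only [Pi.sub_apply, simpleRoot]
  ring

theorem iSupIndep_wtSp (hq : Function.Injective fun m : ℤ => q ^ m) (hd_pos : ∀ i, 0 < d i)
    (hK : ∀ i j, (K i : U) * K j = K j * K i) : iSupIndep (wtSp q d K ρ) := by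
  have hindep := Module.End.independent_iInf_maxGenEigenspace_of_forall_mapsTo
    (fun i => ρ (K i : U)) fun i j => Module.End.mapsTo_maxGenEigenspace_of_comm
      ((show Commute (K j : U) (K i) from hK j i).map ρ)
  have hinj : Function.Injective fun (μ : Fin n → ℤ) i => q ^ (μ i * (d i : ℤ)) := by
    refine fun μ ν hμν => funext fun i => ?_
    exact mul_right_cancel₀ (Nat.cast_ne_zero.2 (hd_pos i).ne') (hq (congrFun hμν i))
  refine (hindep.comp hinj).mono fun μ x hx => ?_
  simp only [Function.comp_apply, Submodule.mem_iInf]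
  exact fun i => (Module.End.mem_maxGenEigenspace _ _ _).2 ⟨1, by simp [mem_wtSp_iff.1 hx i]⟩

/-- The sum of the weight spaces whose weight is strictly smaller than `μ` as measured by the
linear functional `h`. -/
noncomputable def lowerWtSp (q : ℂ) (d : Fin n → ℕ) (K : Fin n → Uˣ)
    (ρ : U →ₐ[ℂ] Module.End ℂ M) (h : (Fin n → ℤ) →ₗ[ℤ] ℤ) (μ : Fin n → ℤ) : Submodule ℂ M :=
  ⨆ (ν) (_ : h ν < h μ), wtSp q d K ρ ν

theorem wtSp_le_lowerWtSp {ν : Fin n → ℤ} (hν : h ν < h μ) :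
    wtSp q d K ρ ν ≤ lowerWtSp q d K ρ h μ :=
  le_iSup₂_of_le ν hν le_rfl

theorem lowerWtSp_le_iSup_ne :
    lowerWtSp q d K ρ h μ ≤ ⨆ (ν) (_ : ν ≠ μ), wtSp q d K ρ ν :=
  biSup_mono fun _ hν hνμ => hν.ne (congrArg h hνμ)

theorem map_F_mem_lowerWtSp (hq0 : q ≠ 0) (hrel : UqRels q a d U E F K)
    (hh : ∀ i, 0 < h (simpleRoot a i)) (hx : x ∈ wtSp q d K ρ μ) (i : Fin n) :
    ρ (F i) x ∈ lowerWtSp q d K ρ h μ := by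
  refine wtSp_le_lowerWtSp ?_ (map_F_mem_wtSp hq0 hrel hx i)
  rw [map_sub]
  exact sub_lt_self _ (hh i)

theorem lowerWtSp_mem_invtSubmodule_F (hq0 : q ≠ 0) (hrel : UqRels q a d U E F K)
    (hh : ∀ i, 0 < h (simpleRoot a i)) (i : Fin n) :
    lowerWtSp q d K ρ h μ ∈ (ρ (F i)).invtSubmodule := by
  refine (Module.End.mem_invtSubmodule _).2 (iSup₂_le fun ν hν x hx => ?_)
  have hle : lowerWtSp q d K ρ h ν ≤ lowerWtSp q d K ρ h μ :=
    biSup_mono fun _ hν' => hν'.trans hν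
  exact hle (map_F_mem_lowerWtSp hq0 hrel hh hx i)

theorem cyclicSubmodule_le_span_sup_lowerWtSp (hq0 : q ≠ 0) (hrel : UqRels q a d U E F K)
    (hh : ∀ i, 0 < h (simpleRoot a i)) (hx : x ∈ wtSp q d K ρ μ) :
    cyclicSubmodule F ρ x ≤ ℂ ∙ x ⊔ lowerWtSp q d K ρ h μ := by
  refine cyclicSubmodule_le (Submodule.mem_sup_left (Submodule.mem_span_singleton_self x))
    fun i => (Module.End.mem_invtSubmodule _).2 (sup_le ?_ fun z hz =>
      Submodule.mem_sup_right (lowerWtSp_mem_invtSubmodule_F hq0 hrel hh i hz))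
  exact (Submodule.span_singleton_le_iff_mem _ _).2
    (Submodule.mem_sup_right (map_F_mem_lowerWtSp hq0 hrel hh hx i))

theorem cyclicSubmodule_map_F_le_lowerWtSp (hq0 : q ≠ 0) (hrel : UqRels q a d U E F K)
    (hh : ∀ i, 0 < h (simpleRoot a i)) (hx : x ∈ wtSp q d K ρ μ) (i : Fin n) :
    cyclicSubmodule F ρ (ρ (F i) x) ≤ lowerWtSp q d K ρ h μ :=
  cyclicSubmodule_le (map_F_mem_lowerWtSp hq0 hrel hh hx i)
    (lowerWtSp_mem_invtSubmodule_F hq0 hrel hh)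

theorem disjoint_lowerWtSp_wtSp (hq : Function.Injective fun m : ℤ => q ^ m)
    (hd_pos : ∀ i, 0 < d i) (hK : ∀ i j, (K i : U) * K j = K j * K i) :
    Disjoint (lowerWtSp q d K ρ h μ) (wtSp q d K ρ μ) :=
  ((iSupIndep_wtSp hq hd_pos hK) μ).symm.mono_left lowerWtSp_le_iSup_ne

theorem cyclicSubmodule_inf_wtSp_le_span (hq : Function.Injective fun m : ℤ => q ^ m)
    (hd_pos : ∀ i, 0 < d i) (hrel : UqRels q a d U E F K)
    (hh : ∀ i, 0 < h (simpleRoot a i)) (hx : x ∈ wtSp q d K ρ μ) :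
    cyclicSubmodule F ρ x ⊓ wtSp q d K ρ μ ≤ ℂ ∙ x :=
  calc
    cyclicSubmodule F ρ x ⊓ wtSp q d K ρ μ
      ≤ (ℂ ∙ x ⊔ lowerWtSp q d K ρ h μ) ⊓ wtSp q d K ρ μ :=
        inf_le_inf_right _ (cyclicSubmodule_le_span_sup_lowerWtSp
          (ne_zero_of_zpow_injective hq) hrel hh hx)
    _ = ℂ ∙ x ⊔ lowerWtSp q d K ρ h μ ⊓ wtSp q d K ρ μ :=
        sup_inf_assoc_of_le _ ((Submodule.span_singleton_le_iff_mem _ _).2 hx)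
    _ = ℂ ∙ x := by
        rw [(disjoint_lowerWtSp_wtSp hq hd_pos hrel.1).eq_bot, sup_bot_eq]

end Weights

section HighestWeight

variable {q : ℂ} {n : ℕ} {a : Fin n → Fin n → ℤ} {d : Fin n → ℕ}
  {U : Type} [Ring U] [Algebra ℂ U] {E F : Fin n → U} {K : Fin n → Uˣ}
  {M : Type} [AddCommGroup M] [Module ℂ M] {ρ : U →ₐ[ℂ] Module.End ℂ M}
  {h : (Fin n → ℤ) →ₗ[ℤ] ℤ} {μ : Fin n → ℤ} {v : M}

/-- A highest weight vector of weight `μ`: a nonzero weight vector killed by all the `E i`. -/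
def IsHighestWeightVector (q : ℂ) (d : Fin n → ℕ) (E : Fin n → U) (K : Fin n → Uˣ)
    (ρ : U →ₐ[ℂ] Module.End ℂ M) (μ : Fin n → ℤ) (v : M) : Prop :=
  v ≠ 0 ∧ v ∈ wtSp q d K ρ μ ∧ ∀ i, ρ (E i) v = 0

theorem map_E_map_F_self (hq0 : q ≠ 0) (hrel : UqRels q a d U E F K)
    (hv : IsHighestWeightVector q d E K ρ μ v) (i : Fin n) :
    ρ (E i) (ρ (F i) v) = ((q ^ (d i : ℤ) - q ^ (-(d i : ℤ)))⁻¹ *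
      (q ^ (μ i * (d i : ℤ)) - q ^ (-(μ i * (d i : ℤ))))) • v := by
  obtain ⟨-, hv_wt, hEv⟩ := hv
  rw [← Module.End.mul_apply, ← map_mul, hrel.E_mul_F_self, map_add, LinearMap.add_apply, map_mul,
    Module.End.mul_apply, hEv, map_zero, zero_add, map_smul, map_sub, LinearMap.smul_apply,
    LinearMap.sub_apply, mem_wtSp_iff.1 hv_wt i, map_K_inv_of_mem_wtSp hq0 hv_wt, ← sub_smul,
    smul_smul]

theorem map_E_map_F_of_ne (hrel : UqRels q a d U E F K)
    (hv : IsHighestWeightVector q d E K ρ μ v) {k i : Fin n} (hki : k ≠ i) :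
    ρ (E k) (ρ (F i) v) = 0 := by
  rw [← Module.End.mul_apply, ← map_mul, hrel.E_mul_F_of_ne hki, map_mul, Module.End.mul_apply,
    hv.2.2, map_zero]

theorem map_F_ne_zero_of_weight_eq_one (hq : Function.Injective fun m : ℤ => q ^ m)
    (hd_pos : ∀ i, 0 < d i) (hrel : UqRels q a d U E F K)
    (hv : IsHighestWeightVector q d E K ρ μ v) {i : Fin n} (hμi : μ i = 1) :
    ρ (F i) v ≠ 0 := by
  have hqd : q ^ (d i : ℤ) - q ^ (-(d i : ℤ)) ≠ 0 := fun h => by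
    have hd_eq : (d i : ℤ) = -d i := hq (sub_eq_zero.1 h)
    have hd_i : 0 < d i := hd_pos i
    omega
  have hEF : ρ (E i) (ρ (F i) v) = v := by
    rw [map_E_map_F_self (ne_zero_of_zpow_injective hq) hrel hv, hμi, one_mul,
      inv_mul_cancel₀ hqd, one_smul]
  intro hFv
  exact hv.1 (by rw [← hEF, hFv, map_zero])

theorem cyclicSubmodule_mem_invtSubmodule_of_isHighestWeightVector (hq0 : q ≠ 0)
    (hrel : UqRels q a d U E F K) (hgen : Algebra.adjoin ℂ (uqGenerators E F K) = ⊤)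
    (hv : IsHighestWeightVector q d E K ρ μ v) (y : U) :
    cyclicSubmodule F ρ v ∈ (ρ y).invtSubmodule := by
  obtain ⟨-, hv_wt, hEv⟩ := hv
  have hK (i) : cyclicSubmodule F ρ v ∈ (ρ (K i)).invtSubmodule := by
    refine cyclicSubmodule_mem_invtSubmodule_of_qcommute ?_ fun j => ⟨_, hrel.K_mul_F i j⟩
    rw [mem_wtSp_iff.1 hv_wt i]
    exact Submodule.smul_mem _ _ self_mem_cyclicSubmodule
  have hK_inv (i) : cyclicSubmodule F ρ v ∈ (ρ ((K i)⁻¹ : Uˣ)).invtSubmodule := by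
    refine cyclicSubmodule_mem_invtSubmodule_of_qcommute ?_ fun j => ⟨_, hrel.K_inv_mul_F hq0 i j⟩
    rw [map_K_inv_of_mem_wtSp hq0 hv_wt i]
    exact Submodule.smul_mem _ _ self_mem_cyclicSubmodule
  have hE (i) : cyclicSubmodule F ρ v ∈ (ρ (E i)).invtSubmodule := by
    refine cyclicSubmodule_mem_invtSubmodule_of_forall (by rw [hEv]; exact zero_mem _) ?_
    intro j z hz hEz
    rw [← Module.End.mul_apply, ← map_mul]
    obtain rfl | hij := eq_or_ne i j
    · rw [hrel.E_mul_F_self, map_add, map_mul, map_smul, map_sub]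
      exact add_mem (cyclicSubmodule_mem_invtSubmodule i hEz)
        (Submodule.smul_mem _ _ (sub_mem (hK i hz) (hK_inv i hz)))
    · rw [hrel.E_mul_F_of_ne hij, map_mul]
      exact cyclicSubmodule_mem_invtSubmodule j hEz
  refine mem_invtSubmodule_of_mem_adjoin ?_ (hgen ▸ Algebra.mem_top : y ∈ _)
  rintro _ (((⟨i, rfl⟩ | ⟨i, rfl⟩) | ⟨i, rfl⟩) | ⟨i, rfl⟩)
  exacts [hE i, cyclicSubmodule_mem_invtSubmodule i, hK i, hK_inv i]

theorem cyclicSubmodule_eq_top_of_isHighestWeightVector (hq0 : q ≠ 0)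
    (hrel : UqRels q a d U E F K) (hgen : Algebra.adjoin ℂ (uqGenerators E F K) = ⊤)
    (hsimple : ∀ N : Submodule ℂ M, (∀ y : U, ∀ x ∈ N, ρ y x ∈ N) → N = ⊥ ∨ N = ⊤)
    (hv : IsHighestWeightVector q d E K ρ μ v) : cyclicSubmodule F ρ v = ⊤ := by
  refine (hsimple _ fun y _ hx =>
    cyclicSubmodule_mem_invtSubmodule_of_isHighestWeightVector hq0 hrel hgen hv y hx).resolve_left
      fun hbot => hv.1 ?_
  rw [← Submodule.mem_bot ℂ, ← hbot]
  exact self_mem_cyclicSubmodule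

theorem map_F_eq_zero_of_weight_eq_zero (hq : Function.Injective fun m : ℤ => q ^ m)
    (hd_pos : ∀ i, 0 < d i) (hrel : UqRels q a d U E F K)
    (hgen : Algebra.adjoin ℂ (uqGenerators E F K) = ⊤) (hh : ∀ i, 0 < h (simpleRoot a i))
    (hsimple : ∀ N : Submodule ℂ M, (∀ y : U, ∀ x ∈ N, ρ y x ∈ N) → N = ⊥ ∨ N = ⊤)
    (hv : IsHighestWeightVector q d E K ρ μ v) {i : Fin n} (hμi : μ i = 0) :
    ρ (F i) v = 0 := by
  have hq0 := ne_zero_of_zpow_injective hq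
  by_contra hFv
  have hFv_hw : IsHighestWeightVector q d E K ρ (μ - simpleRoot a i) (ρ (F i) v) := by
    refine ⟨hFv, map_F_mem_wtSp hq0 hrel hv.2.1 i, fun k => ?_⟩
    obtain rfl | hki := eq_or_ne k i
    · simp [map_E_map_F_self hq0 hrel hv, hμi]
    · exact map_E_map_F_of_ne hrel hv hki
  have hlower : ⊤ ≤ lowerWtSp q d K ρ h μ :=
    (cyclicSubmodule_eq_top_of_isHighestWeightVector hq0 hrel hgen hsimple hFv_hw).ge.trans
      (cyclicSubmodule_map_F_le_lowerWtSp hq0 hrel hh hv.2.1 i)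
  exact hv.1 (Submodule.disjoint_def.1 (disjoint_lowerWtSp_wtSp hq hd_pos hrel.1) v
    (hlower Submodule.mem_top) hv.2.1)

theorem cyclicSubmodule_map_F_eq_iSup_ne (hq : Function.Injective fun m : ℤ => q ^ m)
    (hd_pos : ∀ i, 0 < d i) (hrel : UqRels q a d U E F K)
    (hgen : Algebra.adjoin ℂ (uqGenerators E F K) = ⊤) (hh : ∀ i, 0 < h (simpleRoot a i))
    (hsimple : ∀ N : Submodule ℂ M, (∀ y : U, ∀ x ∈ N, ρ y x ∈ N) → N = ⊥ ∨ N = ⊤)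
    (hv : IsHighestWeightVector q d E K ρ μ v) {j : Fin n} (hμ : ∀ i, i ≠ j → μ i = 0) :
    cyclicSubmodule F ρ (ρ (F j) v) = ⨆ (ν) (_ : ν ≠ μ), wtSp q d K ρ ν := by
  have hq0 := ne_zero_of_zpow_injective hq
  have hspan : ℂ ∙ v ≤ wtSp q d K ρ μ := (Submodule.span_singleton_le_iff_mem _ _).2 hv.2.1
  have hdisj : Disjoint (⨆ (ν) (_ : ν ≠ μ), wtSp q d K ρ ν) (ℂ ∙ v) :=
    (iSupIndep_wtSp hq hd_pos hrel.1 μ).symm.mono_right hspan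
  have hsup : cyclicSubmodule F ρ (ρ (F j) v) ⊔ ℂ ∙ v = ⊤ := by
    rw [sup_comm, eq_top_iff,
      ← cyclicSubmodule_eq_top_of_isHighestWeightVector hq0 hrel hgen hsimple hv]
    exact cyclicSubmodule_le_span_sup_of_forall_ne fun i hij =>
      map_F_eq_zero_of_weight_eq_zero hq hd_pos hrel hgen hh hsimple hv (hμ i hij)
  exact eq_of_le_of_inf_le_of_le_sup
    ((cyclicSubmodule_map_F_le_lowerWtSp hq0 hrel hh hv.2.1 j).trans lowerWtSp_le_iSup_ne)
    (hdisj.eq_bot.trans_le bot_le) (hsup ▸ le_top)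

end HighestWeight

theorem demazure_minus_si_general {q : ℂ} (hq : Function.Injective fun m : ℤ => q ^ m)
    {n : ℕ} {a : Fin n → Fin n → ℤ} {d : Fin n → ℕ} (hd_pos : ∀ i, 0 < d i)
    (hheight : ∃ h : (Fin n → ℤ) →ₗ[ℤ] ℤ, ∀ i, 0 < h (simpleRoot a i))
    {U : Type} [Ring U] [Algebra ℂ U] {E F : Fin n → U} {K : Fin n → Uˣ}
    (hrel : UqRels q a d U E F K) (hgen : Algebra.adjoin ℂ (uqGenerators E F K) = ⊤)
    {M : Type} [AddCommGroup M] [Module ℂ M] {ρ : U →ₐ[ℂ] Module.End ℂ M}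
    (hsimple : ∀ N : Submodule ℂ M, (∀ y : U, ∀ x ∈ N, ρ y x ∈ N) → N = ⊥ ∨ N = ⊤)
    {i j : Fin n} (hhw : ∃ v, IsHighestWeightVector q d E K ρ (fundamentalWeight j) v)
    {u : M} (hu : u ∈ wtSp q d K ρ (simpleReflection a i (fundamentalWeight j))) (hu0 : u ≠ 0) :
    (i ≠ j → cyclicSubmodule F ρ u = ⊤) ∧
    (i = j → cyclicSubmodule F ρ u =
      ⨆ μ ∈ {μ : Fin n → ℤ | wtSp q d K ρ μ ≠ ⊥ ∧ μ ≠ fundamentalWeight j}, wtSp q d K ρ μ) := by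
  obtain ⟨h, hh⟩ := hheight
  obtain ⟨v, hv⟩ := hhw
  have hq0 := ne_zero_of_zpow_injective hq
  have htop := cyclicSubmodule_eq_top_of_isHighestWeightVector hq0 hrel hgen hsimple hv
  constructor
  · intro hij
    rw [simpleReflection_fundamentalWeight_of_ne a hij] at hu
    have hu_span : u ∈ ℂ ∙ v := cyclicSubmodule_inf_wtSp_le_span hq hd_pos hrel hh hv.2.1
      ⟨htop ▸ Submodule.mem_top, hu⟩
    rw [cyclicSubmodule_eq_of_mem_span hu_span hu0, htop]
  · rintro rfl
    have hFv := map_F_mem_wtSp hq0 hrel hv.2.1 i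
    have hcyc := cyclicSubmodule_map_F_eq_iSup_ne hq hd_pos hrel hgen hh hsimple hv
      fun k => fundamentalWeight_of_ne
    rw [simpleReflection_fundamentalWeight_self] at hu
    have hne : fundamentalWeight i - simpleRoot a i ≠ fundamentalWeight i := fun h_eq =>
      (hh i).ne' (by rw [sub_eq_self.1 h_eq, map_zero])
    have hu_cyc : u ∈ cyclicSubmodule F ρ (ρ (F i) v) :=
      hcyc ▸ Submodule.mem_iSup_of_mem _ (Submodule.mem_iSup_of_mem hne hu)
    have hu_span : u ∈ ℂ ∙ ρ (F i) v :=
      cyclicSubmodule_inf_wtSp_le_span hq hd_pos hrel hh hFv ⟨hu_cyc, hu⟩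
    rw [cyclicSubmodule_eq_of_mem_span hu_span hu0, hcyc, iSup_mem_setOf_ne_bot_and]

theorem demazure_minus_si
    -- the deformation parameter: a transcendental complex number
    (q : ℂ) (hq : Transcendental ℚ q)
    -- Cartan data of the complex semisimple Lie algebra 𝔤 of rank n
    (n : ℕ) (hn : 0 < n) (a : Fin n → Fin n → ℤ) (d : Fin n → ℕ)
    (ha_diag : ∀ i, a i i = 2) (ha_off : ∀ i j, i ≠ j → a i j ≤ 0)
    (ha_zero : ∀ i j, a i j = 0 ↔ a j i = 0)
    (hd_pos : ∀ i, 0 < d i)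
    (ha_symm : ∀ i j, (d i : ℤ) * a i j = (d j : ℤ) * a j i)
    -- the quantised enveloping algebra U = U_q(𝔤): carries elements E i, F i and units K i
    -- satisfying the defining relations, and is universal for these relations
    (U : Type) [Ring U] [Algebra ℂ U]
    (E F : Fin n → U) (K : Fin n → Uˣ)
    (hrel : UqRels q a d U E F K)
    (hUuniv : ∀ (B : Type) [Ring B] [Algebra ℂ B] (E' F' : Fin n → B) (K' : Fin n → Bˣ),
      UqRels q a d B E' F' K' → ∃! φ : U →ₐ[ℂ] B,
        (∀ i, φ (E i) = E' i) ∧ (∀ i, φ (F i) = F' i) ∧ (∀ i, φ (K i : U) = (K' i : B)))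
    -- the Weyl group W, acting faithfully on the weight lattice P = ℤⁿ (coordinates taken in
    -- the basis of fundamental weights ϖ i), generated by the simple reflections s i, with
    -- longest element w₀ (characterised by: w₀ maps dominant weights to antidominant ones)
    (W : Type) [Group W] [Finite W] (σ : W →* Multiplicative (AddAut (Fin n → ℤ)))
    (hσinj : Function.Injective σ)
    (s : Fin n → W) (hsgen : Subgroup.closure (Set.range s) = ⊤)
    (hs : ∀ i (μ : Fin n → ℤ), σ (s i) μ = fun k => μ k - μ i * a k i)
    (w₀ : W) (hw₀ : ∀ μ : Fin n → ℤ, (∀ i, 0 ≤ μ i) → ∀ i, σ w₀ μ i ≤ 0)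
    -- the simple finite-dimensional modules V(λ) of highest weight λ = ∑ c i ϖ i ∈ P⁺
    (V : (Fin n → ℕ) → Type) [∀ c, AddCommGroup (V c)] [∀ c, Module ℂ (V c)]
    (ρ : ∀ c, U →ₐ[ℂ] Module.End ℂ (V c))
    (hfd : ∀ c, FiniteDimensional ℂ (V c))
    (hsimple : ∀ c (N : Submodule ℂ (V c)), (∀ (u : U), ∀ v ∈ N, ρ c u v ∈ N) → N = ⊥ ∨ N = ⊤)
    (hhw : ∀ c, ∃ v : V c, v ≠ 0 ∧ v ∈ wtSp q d K (ρ c) (fun i => (c i : ℤ)) ∧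
      ∀ i, ρ c (E i) v = 0)
    (hwtsum : ∀ c, (⨆ μ : Fin n → ℤ, wtSp q d K (ρ c) μ) = ⊤)
    (hextremal : ∀ c (w : W),
      Module.finrank ℂ (wtSp q d K (ρ c) (σ w (fun i => (c i : ℤ)))) = 1) :
    -- V⁻_{s_i}(ϖ_j) equals V(ϖ_j) when i ≠ j, and equals the (direct) sum of all
    -- weight spaces of V(ϖ_j) except the highest one when i = j
    ∀ i j : Fin n, ∀ u : V (Pi.single j 1),
      u ∈ wtSp q d K (ρ (Pi.single j 1)) (σ (s i) (fun k => ((Pi.single j 1 : Fin n → ℕ) k : ℤ))) → u ≠ 0 →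
      (i ≠ j → Submodule.span ℂ
          {x | ∃ y ∈ Algebra.adjoin ℂ (Set.range F), x = ρ (Pi.single j 1) y u} = ⊤) ∧
      (i = j → Submodule.span ℂ
          {x | ∃ y ∈ Algebra.adjoin ℂ (Set.range F), x = ρ (Pi.single j 1) y u} =
        ⨆ μ ∈ {μ : Fin n → ℤ | wtSp q d K (ρ (Pi.single j 1)) μ ≠ ⊥ ∧
            μ ≠ (fun k => ((Pi.single j 1 : Fin n → ℕ) k : ℤ))},
          wtSp q d K (ρ (Pi.single j 1)) μ) := by
  intro i j u hu hu0
  rw [hs] at hu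
  exact demazure_minus_si_general (zpow_injective_of_transcendental hq) hd_pos
    (exists_pos_on_simpleRoot ha_diag σ s hs) hrel
    (adjoin_uqGenerators_eq_top_of_universal hrel hUuniv) (hsimple _) (hhw _) hu hu0
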